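/- Under the feature and core-state assumptions, define for each state s: J*_ALP(s) := min { φ_sᵀθ : θ ∈ ℝ^d, Φθ ≥ v* } and J*_LRA(s) := min { φ_sᵀθ : θ ∈ ℝ^d, W*EΦθ ≥ W*E v* }. Then max_{s∈𝒮} |J*_ALP(s) − J*_LRA(s)| ≤ 2·ε_approx. -/

import Mathlib

open scoped BigOperators

namespace MDPPlan

variable {S A : Type} [Fintype S] [Fintype A] [DecidableEq S] {d m : ℕ}

/-- `φ_sᵀθ`: dot product of the feature vector of state `s` with weights `θ`. -/
noncomputable def phiDot (Φ : S → Fin d → ℝ) (θ : Fin d → ℝ) (s : S) : ℝ :=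
  ∑ j, Φ s j * θ j

/-- The sequence `𝒮₊ = (s₀, s₁, …, s_m)`: `none` is the planning state `s₀`,
`some i` is the `i`-th core state. -/
def splus (s₀ : S) (c : Fin m → S) : Option (Fin m) → S := fun o => o.elim s₀ c

/-- State-transition matrix `P_π` of a stationary policy `π`. -/
noncomputable def Ppi (P : S → A → S → ℝ) (π : S → A → ℝ) : Matrix S S ℝ :=
  Matrix.of fun s s' => ∑ a, π s a * P s a s'

/-- Expected reward `r_π` of a stationary policy `π`. -/
noncomputable def rpi (r : S → A → ℝ) (π : S → A → ℝ) : S → ℝ :=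
  fun s => ∑ a, π s a * r s a

/-- `π` is a stationary policy: each `π(·|s)` is a probability distribution over actions. -/
def IsPolicy (π : S → A → ℝ) : Prop := (∀ s a, 0 ≤ π s a) ∧ ∀ s, ∑ a, π s a = 1

/-- Value function `v_π = Σ_{t≥0} (γ P_π)^t r_π`. -/
noncomputable def vpi (γ : ℝ) (P : S → A → S → ℝ) (r : S → A → ℝ) (π : S → A → ℝ) :
    S → ℝ :=
  ∑' t : ℕ, ((γ • Ppi P π) ^ t).mulVec (rpi r π)

/-- Optimal value function `v*(s) = sup_π v_π(s)`. -/
noncomputable def vstar (γ : ℝ) (P : S → A → S → ℝ) (r : S → A → ℝ) : S → ℝ :=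
  fun s => ⨆ π : {π : S → A → ℝ // IsPolicy π}, vpi γ P r π.1 s

/-- Optimal action-value function `q*(s,a) = r_{sa} + γ P_{sa} v*`. -/
noncomputable def qstar (γ : ℝ) (P : S → A → S → ℝ) (r : S → A → ℝ) (s : S) (a : A) : ℝ :=
  r s a + γ * ∑ s', P s a s' * vstar γ P r s'

/-- `ε_approx = inf_θ max_s |v*(s) − φ_sᵀθ|`. -/
noncomputable def epsApprox (Φ : S → Fin d → ℝ) (v : S → ℝ) : ℝ :=
  ⨅ θ : Fin d → ℝ, ⨆ s : S, |v s - phiDot Φ θ s|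

/-- Membership in `Λ`: nonnegative and the `s₀`-block sums to one. -/
def InLambda (lam : Option (Fin m) × A → ℝ) : Prop :=
  (∀ p, 0 ≤ lam p) ∧ ∑ a, lam (none, a) = 1

/-- The CoreLP equality constraint `φ_{s₀}ᵀ + λᵀW(γP − E)Φ = 0ᵀ`. -/
def CoreLPConstraint (γ : ℝ) (P : S → A → S → ℝ) (Φ : S → Fin d → ℝ) (s₀ : S)
    (c : Fin m → S) (lam : Option (Fin m) × A → ℝ) : Prop :=
  ∀ j : Fin d, Φ s₀ j + ∑ p : Option (Fin m) × A,
    lam p * (γ * (∑ s', P (splus s₀ c p.1) p.2 s' * Φ s' j) - Φ (splus s₀ c p.1) j) = 0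

/-- The CoreLP objective `λᵀWr`. -/
noncomputable def CoreLPObj (r : S → A → ℝ) (s₀ : S) (c : Fin m → S)
    (lam : Option (Fin m) × A → ℝ) : ℝ :=
  ∑ p : Option (Fin m) × A, lam p * r (splus s₀ c p.1) p.2

/-- The optimal value `V†` of CoreLP. -/
noncomputable def Vdagger (γ : ℝ) (P : S → A → S → ℝ) (r : S → A → ℝ)
    (Φ : S → Fin d → ℝ) (s₀ : S) (c : Fin m → S) : ℝ :=
  sSup {x : ℝ | ∃ lam : Option (Fin m) × A → ℝ,
    InLambda lam ∧ CoreLPConstraint γ P Φ s₀ c lam ∧ x = CoreLPObj r s₀ c lam}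

/-- Feasibility for LRALP: `W*r + W*(γP − E)Φθ ≤ 0`. -/
def LRALPFeasible (γ : ℝ) (P : S → A → S → ℝ) (r : S → A → ℝ) (Φ : S → Fin d → ℝ)
    (c : Fin m → S) (θ : Fin d → ℝ) : Prop :=
  ∀ (i : Fin m) (a : A),
    r (c i) a + (γ * (∑ s', P (c i) a s' * phiDot Φ θ s') - phiDot Φ θ (c i)) ≤ 0

/-- `V_LRALP(μ) = min { μᵀΦθ : θ feasible for LRALP }`. -/
noncomputable def VLRALP (γ : ℝ) (P : S → A → S → ℝ) (r : S → A → ℝ) (Φ : S → Fin d → ℝ)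
    (c : Fin m → S) (μ : S → ℝ) : ℝ :=
  sInf {x : ℝ | ∃ θ : Fin d → ℝ, LRALPFeasible γ P r Φ c θ ∧ x = ∑ s, μ s * phiDot Φ θ s}

/-- The Saddle CoreLP objective `f(λ,θ) = λᵀWr + φ_{s₀}ᵀθ + λᵀW(γP − E)Φθ`. -/
noncomputable def fObj (γ : ℝ) (P : S → A → S → ℝ) (r : S → A → ℝ) (Φ : S → Fin d → ℝ)
    (s₀ : S) (c : Fin m → S) (lam : Option (Fin m) × A → ℝ) (θ : Fin d → ℝ) : ℝ :=
  CoreLPObj r s₀ c lam + phiDot Φ θ s₀ +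
    ∑ p : Option (Fin m) × A,
      lam p * (γ * (∑ s', P (splus s₀ c p.1) p.2 s' * phiDot Φ θ s') -
        phiDot Φ θ (splus s₀ c p.1))

/-- The Saddle LRALP objective `g_μ(λ*,θ) = λ*ᵀW*r + μᵀΦθ + λ*ᵀW*(γP − E)Φθ`. -/
noncomputable def gObj (γ : ℝ) (P : S → A → S → ℝ) (r : S → A → ℝ) (Φ : S → Fin d → ℝ)
    (c : Fin m → S) (μ : S → ℝ) (lamS : Fin m × A → ℝ) (θ : Fin d → ℝ) : ℝ :=
  (∑ p : Fin m × A, lamS p * r (c p.1) p.2) + (∑ s, μ s * phiDot Φ θ s) +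
    ∑ p : Fin m × A,
      lamS p * (γ * (∑ s', P (c p.1) p.2 s' * phiDot Φ θ s') - phiDot Φ θ (c p.1))

/-- The `𝓑`-bounded duality gap `δ_𝓑(λ̂,θ̂) = max_{λ∈Λ_γ} f(λ,θ̂) − inf_{θ∈𝓑} f(λ̂,θ)`. -/
noncomputable def dualityGap (γ : ℝ) (P : S → A → S → ℝ) (r : S → A → ℝ)
    (Φ : S → Fin d → ℝ) (s₀ : S) (c : Fin m → S) (Bset : Set (Fin d → ℝ))
    (lamHat : Option (Fin m) × A → ℝ) (θHat : Fin d → ℝ) : ℝ :=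
  sSup {x : ℝ | ∃ lam : Option (Fin m) × A → ℝ,
      InLambda lam ∧ (∑ p, |lam p|) = 1 / (1 - γ) ∧ x = fObj γ P r Φ s₀ c lam θHat} -
    sInf {x : ℝ | ∃ θ ∈ Bset, x = fObj γ P r Φ s₀ c lamHat θ}


/-- `max_s |J*_ALP(s) − J*_LRA(s)| ≤ 2 ε_approx`. -/
theorem jalp_jlra_close
    {S A : Type} [Fintype S] [Fintype A] [DecidableEq S] [Nonempty S] [Nonempty A]
    {d m : ℕ} (γ : ℝ) (hγ0 : 0 ≤ γ) (hγ1 : γ < 1)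
    (P : S → A → S → ℝ) (hP0 : ∀ s a s', 0 ≤ P s a s')
    (hP1 : ∀ s a, ∑ s', P s a s' = 1)
    (r : S → A → ℝ)
    (Φ : S → Fin d → ℝ) (hfeat : ∃ η : Fin d → ℝ, ∀ s, phiDot Φ η s = 1)
    (c : Fin m → S) (hc : Function.Injective c)
    (hcore : ∃ Z : S → Fin m → ℝ, (∀ s i, 0 ≤ Z s i) ∧
      ∀ s j, Φ s j = ∑ i, Z s i * Φ (c i) j) :
    ∀ s : S,
      |sInf {x : ℝ | ∃ θ : Fin d → ℝ,
          (∀ s' : S, vstar γ P r s' ≤ phiDot Φ θ s') ∧ x = phiDot Φ θ s} -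
        sInf {x : ℝ | ∃ θ : Fin d → ℝ,
          (∀ (i : Fin m) (_ : A), vstar γ P r (c i) ≤ phiDot Φ θ (c i)) ∧
            x = phiDot Φ θ s}| ≤
      2 * epsApprox Φ (vstar γ P r) := by
  intro s
  obtain ⟨a0⟩ := ‹Nonempty A›
  obtain ⟨η, hη⟩ := hfeat
  obtain ⟨Z, hZ0, hZ⟩ := hcore
  generalize vstar γ P r = v
  have hadd : ∀ (θ : Fin d → ℝ) (t : ℝ) (s : S),
      phiDot Φ (θ + t • η) s = phiDot Φ θ s + t := by
    intro θ t s
    have h := hη s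
    simp only [phiDot, Pi.add_apply, Pi.smul_apply, smul_eq_mul] at h ⊢
    calc ∑ j, Φ s j * (θ j + t * η j)
        = ∑ j, Φ s j * θ j + t * ∑ j, Φ s j * η j := by
          rw [Finset.mul_sum, ← Finset.sum_add_distrib]
          exact Finset.sum_congr rfl fun j _ => by ring
      _ = _ := by rw [h, mul_one]
  have hcomb : ∀ (θ : Fin d → ℝ) (s : S),
      phiDot Φ θ s = ∑ i, Z s i * phiDot Φ θ (c i) := by
    intro θ s
    simp only [phiDot, Finset.mul_sum]
    rw [Finset.sum_comm]
    refine Finset.sum_congr rfl fun j _ => ?_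
    rw [hZ s j, Finset.sum_mul]
    exact Finset.sum_congr rfl fun i _ => by ring
  have hZ1 : ∀ s, ∑ i, Z s i = 1 := by
    intro s
    have h := hcomb η s
    simp only [hη, mul_one] at h
    exact h.symm
  have key : ∀ θ0 : Fin d → ℝ,
      |sInf {x : ℝ | ∃ θ : Fin d → ℝ,
          (∀ s' : S, v s' ≤ phiDot Φ θ s') ∧ x = phiDot Φ θ s} -
        sInf {x : ℝ | ∃ θ : Fin d → ℝ,
          (∀ (i : Fin m) (_ : A), v (c i) ≤ phiDot Φ θ (c i)) ∧
            x = phiDot Φ θ s}| ≤ 2 * ⨆ s : S, |v s - phiDot Φ θ0 s| := by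
    intro θ0
    have he : ∀ s, |v s - phiDot Φ θ0 s| ≤ ⨆ s : S, |v s - phiDot Φ θ0 s| := fun s =>
      le_ciSup (f := fun s => |v s - phiDot Φ θ0 s|) (Set.finite_range _).bddAbove s
    generalize (⨆ s : S, |v s - phiDot Φ θ0 s|) = e at he ⊢
    have he' := fun s => abs_le.1 (he s)
    have hlow : ∀ θ : Fin d → ℝ, (∀ (i : Fin m) (_ : A), v (c i) ≤ phiDot Φ θ (c i)) →
        ∀ s, v s - 2 * e ≤ phiDot Φ θ s := by
      intro θ hθ s
      have h1 : phiDot Φ θ0 s - e ≤ phiDot Φ θ s := by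
        rw [hcomb θ0 s, hcomb θ s]
        have : ∑ i, Z s i * (phiDot Φ θ0 (c i) - e) ≤ ∑ i, Z s i * phiDot Φ θ (c i) := by
          refine Finset.sum_le_sum fun i _ => mul_le_mul_of_nonneg_left ?_ (hZ0 s i)
          linarith [hθ i a0, (he' (c i)).1]
        simp only [mul_sub, Finset.sum_sub_distrib, ← Finset.sum_mul, hZ1, one_mul] at this
        exact this
      linarith [(he' s).2]
    have hfe : ∀ s', v s' ≤ phiDot Φ (θ0 + e • η) s' := by
      intro s'
      rw [hadd]
      linarith [(he' s').2]
    have hb2 : BddBelow {x : ℝ | ∃ θ : Fin d → ℝ,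
        (∀ (i : Fin m) (_ : A), v (c i) ≤ phiDot Φ θ (c i)) ∧ x = phiDot Φ θ s} := by
      refine ⟨v s - 2 * e, ?_⟩
      rintro x ⟨θ, hθ, rfl⟩
      exact hlow θ hθ s
    have hb1 : BddBelow {x : ℝ | ∃ θ : Fin d → ℝ,
        (∀ s' : S, v s' ≤ phiDot Φ θ s') ∧ x = phiDot Φ θ s} := by
      refine ⟨v s, ?_⟩
      rintro x ⟨θ, hθ, rfl⟩
      exact hθ s
    have e0 : 0 ≤ e := (abs_nonneg _).trans (he s)
    have h21 := csInf_le_csInf (s := {x : ℝ | ∃ θ : Fin d → ℝ,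
        (∀ s' : S, v s' ≤ phiDot Φ θ s') ∧ x = phiDot Φ θ s}) hb2
        ⟨_, θ0 + e • η, hfe, rfl⟩ (by
          rintro x ⟨θ, hθ, rfl⟩
          exact ⟨θ, fun i _ => hθ (c i), rfl⟩)
    have h12 : sInf {x : ℝ | ∃ θ : Fin d → ℝ,
          (∀ s' : S, v s' ≤ phiDot Φ θ s') ∧ x = phiDot Φ θ s} - 2 * e ≤
        sInf {x : ℝ | ∃ θ : Fin d → ℝ,
          (∀ (i : Fin m) (_ : A), v (c i) ≤ phiDot Φ θ (c i)) ∧ x = phiDot Φ θ s} := by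
      refine le_csInf ⟨_, θ0 + e • η, fun i _ => hfe (c i), rfl⟩ ?_
      rintro x ⟨θ, hθ, rfl⟩
      rw [sub_le_iff_le_add]
      refine csInf_le hb1 ⟨θ + (2 * e) • η, fun s' => ?_, (hadd _ _ _).symm⟩
      rw [hadd]
      linarith [hlow θ hθ s']
    rw [abs_le]
    constructor <;> linarith
  rw [epsApprox, ← div_le_iff₀' (by norm_num : (0:ℝ) < 2)]
  refine le_ciInf fun θ0 => ?_
  rw [div_le_iff₀' (by norm_num : (0:ℝ) < 2)]
  exact key θ0

end MDPPlan
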